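/- Let T be the set of all subsets of V of the form C + v where C is a tangent cone of Π_Φ at one of its faces and v ∈ V. The function ℱ : GP⁺_Φ → ⊕_{C∈T} ℤ defined by ℱ(P) := ∑_{C ∈ T tightly containing P} e_C (a finite sum, where {e_C}_{C∈T} is the standard basis) is the universal valuative function: ℱ is valuative, and for every valuative function f : GP⁺_Φ → A into an abelian group A there exists a unique group homomorphism φ : ⊕_{C∈T} ℤ → A with φ ∘ ℱ = f. -/

import Mathlib

/-!
The universal property holds for every polytope `Q = convexHull ℝ X` with `X` finite; root systems
enter only through the finiteness of the Weyl group (`weyl_orbit_finite`). Write `C_G`, `N_G` for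
the tangent and normal cones of `Q`.

*Euler characteristic.* If `∑ a_i 1_{K_i} = 0` with `K_i` compact convex, then the `a_i` with
`K_i ≠ ∅` add up to zero (`euler_pi`, `euler_inter`), by induction on the dimension.

*`ℱ` is valuative.* Let `G` be the face of `Q` in direction `y`. As `N_G` lies in a single normal
cone of a deformation `P`, the cone `v + C_G` tightly contains `P` iff `P` meets the coset
`L = v + lineal C_G` and `⟪y, ·⟫ ≤ ⟪y, v⟫` on `P` (`tctight_iff_of_extDef`). On a given finite
relation this is a difference `[P ∩ K ≠ ∅] - [P ∩ K' ≠ ∅]` for compact convex `K`, `K'`, so it is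
a valuation (`tight_valuation`).

*Generation by cones.* The directions in which a deformation `P` has a maximum form a union `S` of
normal cones of `Q`. Normal cones are closed under intersection (`normCone_inter`), so
`1_S = ∑ c_G 1_{N_G}` with integers `c_G`. With `v_G ∈ P` maximizing all of `N_G`, one gets
`1_P = ∑ c_G 1_{v_G + C_G}` (`extDef_eq_sum`): a point `x` lies outside `v_G + C_G` iff `N_G` meets
the convex set `U` of directions separating `x` from `P`, and the Euler characteristic turns
`1_S = ∑ c_G 1_{N_G}` into the statement that the `c_G` with `N_G ∩ U ≠ ∅` add up to `1` when
`U ≠ ∅`, that is when `x ∉ P`. Convexity of `U` uses that `S` contains every direction bounded on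
`P` (`mem_suppDirs_of_bounded`).

*Conclusion.* Translated tangent cones are themselves extended deformations (`extDef_transl`, using
that finitely generated cones are polyhedral, `coneGen_polyhedral`), and on them `ℱ` is
unitriangular for tight containment, so `e_T ↦ ℱ(T)` is an automorphism of `⊕ ℤ`
(`linearCombination_bijective`). A valuative function is determined by its values on the cones,
and these can be prescribed through this automorphism.
-/


open RealInnerProductSpace

noncomputable def indic {V : Type*} (P : Set V) : V → ℤ := P.indicator 1

noncomputable def iv (p : Prop) : ℤ := @ite _ p (Classical.propDecidable p) 1 0

def Valuative {V A : Type*} [AddCommGroup A] (Fam : Set (Set V)) (f : Set V → A) : Prop :=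
  ∀ (k : ℕ) (a : Fin k → ℤ) (P : Fin k → Set V),
    (∀ i, P i ∈ Fam) → (∑ i, a i • indic (P i)) = 0 → (∑ i, a i • f (P i)) = 0

variable {V : Type*} [NormedAddCommGroup V] [InnerProductSpace ℝ V] [FiniteDimensional ℝ V]

def IsPolyhedron (P : Set V) : Prop :=
  P.Nonempty ∧ ∃ s : Finset (V × ℝ), P = {x | ∀ p ∈ s, ⟪p.1, x⟫ ≤ p.2}

def IsFace (Q F : Set V) : Prop :=
  ∃ y : V, F.Nonempty ∧ F = {x | x ∈ Q ∧ ∀ q ∈ Q, ⟪y, q⟫ ≤ ⟪y, x⟫}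

def IsConvexCone (C : Set V) : Prop :=
  (0 : V) ∈ C ∧ Convex ℝ C ∧ ∀ c : ℝ, 0 ≤ c → ∀ x ∈ C, c • x ∈ C

def coneGen (S : Set V) : Set V := ⋂₀ {C : Set V | IsConvexCone C ∧ S ⊆ C}

def tanCone (Q F : Set V) : Set V := coneGen {d | ∃ q ∈ Q, ∃ v ∈ F, d = q - v}

def normCone (Q F : Set V) : Set V := {y | ∀ v ∈ F, ∀ q ∈ Q, ⟪y, q⟫ ≤ ⟪y, v⟫}

def IsExtDef (Q P : Set V) : Prop :=
  IsPolyhedron P ∧ ∀ F : Set V, IsFace P F → ∃ 𝒢 : Set (Set V),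
    (∀ G ∈ 𝒢, IsFace Q G) ∧ normCone P F = ⋃ G ∈ 𝒢, normCone Q G

def lineal (C : Set V) : Set V := C ∩ (-C)

def transl (v : V) (C : Set V) : Set V := (fun x => v + x) '' C

def TightContains (C : Set V) (v : V) (P : Set V) : Prop :=
  P ⊆ transl v C ∧ (P ∩ transl v (lineal C)).Nonempty

/-- The set of all translates of tangent cones of `Q` (as subsets of `V`). -/
def TranslSet (Q : Set V) : Set (Set V) :=
  {T : Set V | ∃ F v, IsFace Q F ∧ T = transl v (tanCone Q F)}

/-- `T` tightly contains `P` as a translated tangent cone of `Q`. -/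
def TCtight (Q T P : Set V) : Prop :=
  ∃ F v, IsFace Q F ∧ T = transl v (tanCone Q F) ∧ TightContains (tanCone Q F) v P

/-- The Weyl group of a root system `R`: the subgroup of the group of linear isometries of `V`
generated by the orthogonal reflections `s_α : x ↦ x - (2⟪x,α⟫/⟪α,α⟫) α` for `α ∈ R`. -/
def WeylGrp (R : Finset V) : Subgroup (V ≃ₗᵢ[ℝ] V) :=
  Subgroup.closure {s | ∃ α ∈ R, ∀ x : V, s x = x - ((2 * ⟪x, α⟫) / ⟪α, α⟫) • α}

set_option linter.unusedSectionVars false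

/-! ### The Euler characteristic of compact convex sets -/

theorem iv_pos {p : Prop} (h : p) : iv p = 1 := by simp [iv, h]

theorem iv_neg {p : Prop} (h : ¬ p) : iv p = 0 := by simp [iv, h]

theorem iv_congr {p q : Prop} (h : p ↔ q) : iv p = iv q := by rw [propext h]

theorem indic_apply {α : Type*} (P : Set α) (x : α) : indic P x = iv (x ∈ P) := by
  by_cases h : x ∈ P
  · rw [iv_pos h, indic, Set.indicator_of_mem h, Pi.one_apply]
  · rw [iv_neg h, indic, Set.indicator_of_notMem h]

/-- On the line, the endpoint `max (K i)` is detected by the jump of the sum of indicators just to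
the right of it, so the coefficients of all intervals with a given right endpoint add up to zero. -/
theorem euler_real {ι : Type*} [Fintype ι] (a : ι → ℤ) (K : ι → Set ℝ)
    (hc : ∀ i, IsCompact (K i)) (hconv : ∀ i, Convex ℝ (K i))
    (h : ∀ t, ∑ i, a i * iv (t ∈ K i) = 0) : ∑ i, a i * iv (K i).Nonempty = 0 := by
  classical
  have key : ∀ t, ∑ i, a i * iv (IsGreatest (K i) t) = 0 := by
    intro t
    have hev : ∀ᶠ t' in nhdsWithin t (Set.Ioi t), ∀ i,
        (t' ∈ K i ↔ t ∈ K i ∧ ¬ IsGreatest (K i) t) := by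
      rw [Filter.eventually_all]
      intro i
      by_cases ht : t ∈ K i
      · by_cases hg : IsGreatest (K i) t
        · filter_upwards [self_mem_nhdsWithin] with t' ht'
          have : t' ∉ K i := fun hh => not_lt.2 (hg.2 hh) ht'
          simp [this, hg]
        · have : ∃ m ∈ K i, t < m := by
            by_contra hcon
            push Not at hcon
            exact hg ⟨ht, hcon⟩
          obtain ⟨m, hm, htm⟩ := this
          filter_upwards [Ioo_mem_nhdsGT htm] with t' ht'
          have : t' ∈ K i := (hconv i).ordConnected.out ht hm ⟨ht'.1.le, ht'.2.le⟩
          simp [this, hg, ht]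
      · have : ∀ᶠ t' in nhds t, t' ∉ K i := (hc i).isClosed.isOpen_compl.mem_nhds ht
        filter_upwards [nhdsWithin_le_nhds this] with t' ht'
        simp [ht, ht']
    obtain ⟨t', ht'⟩ := hev.exists
    have e : ∀ i, a i * iv (IsGreatest (K i) t) = a i * iv (t ∈ K i) - a i * iv (t' ∈ K i) := by
      intro i
      rw [iv_congr (ht' i)]
      by_cases hg : IsGreatest (K i) t
      · have := hg.1
        rw [iv_pos hg, iv_pos this, iv_neg (by tauto)]; ring
      · by_cases ht : t ∈ K i
        · rw [iv_neg hg, iv_pos ht, iv_pos ⟨ht, hg⟩]; ring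
        · rw [iv_neg hg, iv_neg ht, iv_neg (by tauto)]; ring
    rw [Finset.sum_congr rfl fun i _ => e i, Finset.sum_sub_distrib, h, h, sub_zero]
  have e : ∀ i, iv (K i).Nonempty
      = ∑ t ∈ Finset.univ.image (fun j => sSup (K j)), iv (IsGreatest (K i) t) := by
    intro i
    by_cases hne : (K i).Nonempty
    · have hg := (hc i).isGreatest_sSup hne
      rw [Finset.sum_eq_single (sSup (K i)), iv_pos hne, iv_pos hg]
      · intro t _ ht
        exact iv_neg fun h' => ht (h'.unique hg)
      · intro hn
        exact absurd (Finset.mem_image_of_mem _ (Finset.mem_univ i)) hn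
    · rw [iv_neg hne, Finset.sum_eq_zero]
      intro t _
      exact iv_neg fun h' => hne ⟨t, h'.1⟩
  simp_rw [e, Finset.mul_sum]
  rw [Finset.sum_comm]
  exact Finset.sum_eq_zero fun t _ => key t

/-- Induction on the dimension: fibrewise over the projection forgetting the first coordinate, the
one-dimensional case shows that the relation persists for the projected sets. -/
theorem euler_pi {ι : Type*} [Fintype ι] (a : ι → ℤ) (n : ℕ) : ∀ (K : ι → Set (Fin n → ℝ)),
    (∀ i, IsCompact (K i)) → (∀ i, Convex ℝ (K i)) →
    (∀ t, ∑ i, a i * iv (t ∈ K i) = 0) → ∑ i, a i * iv (K i).Nonempty = 0 := by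
  induction n with
  | zero =>
    intro K _ _ h
    rw [← h 0]
    refine Finset.sum_congr rfl fun i _ => ?_
    rw [iv_congr]
    exact ⟨fun ⟨x, hx⟩ => by rwa [Subsingleton.elim 0 x], fun hx => ⟨_, hx⟩⟩
  | succ n ih =>
    intro K hc hconv h
    let tl : (Fin (n + 1) → ℝ) →ₗ[ℝ] (Fin n → ℝ) := LinearMap.funLeft ℝ ℝ Fin.succ
    have htl : Continuous tl := tl.continuous_of_finiteDimensional
    have := ih (fun i => tl '' K i) (fun i => (hc i).image htl)
      (fun i => (hconv i).linear_image tl) ?_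
    · simpa only [Set.image_nonempty] using this
    intro x
    let ev : (Fin (n + 1) → ℝ) →ₗ[ℝ] ℝ := LinearMap.proj 0
    have hev : Continuous ev := ev.continuous_of_finiteDimensional
    have hmem : ∀ i t, t ∈ ev '' (K i ∩ tl ⁻¹' {x}) ↔ Fin.cons t x ∈ K i := by
      intro i t
      constructor
      · rintro ⟨z, ⟨hz, hzx⟩, rfl⟩
        have : Fin.cons (ev z) x = z := by
          rw [← hzx]
          exact Fin.cons_self_tail z
        rwa [this]
      · intro hz
        exact ⟨_, ⟨hz, by ext j; simp [tl, LinearMap.funLeft]⟩, by simp [ev]⟩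
    have := euler_real a (fun i => ev '' (K i ∩ tl ⁻¹' {x}))
      (fun i => ((hc i).inter_right (isClosed_singleton.preimage htl)).image hev)
      (fun i => ((hconv i).inter ((convex_singleton x).linear_preimage tl)).linear_image ev)
      (fun t => by
        rw [← h (Fin.cons t x)]
        exact Finset.sum_congr rfl fun i _ => by rw [iv_congr (hmem i t)])
    rw [← this]
    refine Finset.sum_congr rfl fun i _ => ?_
    rw [iv_congr]
    rw [Set.image_nonempty]
    exact ⟨fun ⟨z, hz, hzx⟩ => ⟨z, hz, hzx⟩, fun ⟨z, hz, hzx⟩ => ⟨z, hz, hzx⟩⟩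

/-- The valuation `P ↦ [P ∩ K ≠ ∅]` on closed convex sets `P`, for a fixed compact convex `K`. -/
theorem euler_inter {ι : Type*} [Fintype ι] (a : ι → ℤ) (P : ι → Set V) (K : Set V)
    (hP : ∀ i, IsClosed (P i)) (hPc : ∀ i, Convex ℝ (P i)) (hK : IsCompact K) (hKc : Convex ℝ K)
    (h : ∀ x ∈ K, ∑ i, a i * iv (x ∈ P i) = 0) : ∑ i, a i * iv (P i ∩ K).Nonempty = 0 := by
  let e := (Module.finBasis ℝ V).equivFun
  have he : Continuous e := e.toLinearMap.continuous_of_finiteDimensional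
  have := euler_pi a _ (fun i => e '' (P i ∩ K)) (fun i => (hK.inter_left (hP i)).image he)
    (fun i => ((hPc i).inter hKc).linear_image e.toLinearMap) ?_
  · simpa only [Set.image_nonempty] using this
  intro t
  obtain ⟨x, rfl⟩ := e.surjective t
  simp_rw [e.injective.mem_set_image]
  by_cases hx : x ∈ K
  · rw [← h x hx]
    exact Finset.sum_congr rfl fun i _ => by rw [iv_congr (q := x ∈ P i) (by simp [hx])]
  · exact Finset.sum_eq_zero fun i _ => by rw [iv_neg (fun hh => hx hh.2), mul_zero]

/-! ### Finitely generated cones are polyhedral -/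

theorem IsConvexCone.add_mem {C : Set V} (hC : IsConvexCone C) {x y : V} (hx : x ∈ C)
    (hy : y ∈ C) : x + y ∈ C := by
  have h := hC.2.2 2 (by norm_num) _
    (hC.2.1 hx hy (by norm_num : (0 : ℝ) ≤ 1 / 2) (by norm_num : (0 : ℝ) ≤ 1 / 2) (by norm_num))
  rwa [smul_add, smul_smul, smul_smul, show (2 : ℝ) * (1 / 2) = 1 by norm_num, one_smul,
    one_smul] at h

theorem isConvexCone_of {C : Set V} (h0 : (0 : V) ∈ C) (ha : ∀ x ∈ C, ∀ y ∈ C, x + y ∈ C)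
    (hs : ∀ c : ℝ, 0 ≤ c → ∀ x ∈ C, c • x ∈ C) : IsConvexCone C :=
  ⟨h0, fun x hx y hy s t hs' ht _ => ha _ (hs s hs' x hx) _ (hs t ht y hy), hs⟩

theorem subset_coneGen (S : Set V) : S ⊆ coneGen S :=
  fun _ hx _ hC => hC.2 hx

theorem coneGen_min {S C : Set V} (hC : IsConvexCone C) (h : S ⊆ C) : coneGen S ⊆ C :=
  fun _ hx => hx C ⟨hC, h⟩

theorem isConvexCone_coneGen (S : Set V) : IsConvexCone (coneGen S) :=
  isConvexCone_of (fun _ hC => hC.1.1) (fun _ hx _ hy C hC => hC.1.add_mem (hx C hC) (hy C hC))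
    fun c hc _ hx C hC => hC.1.2.2 c hc _ (hx C hC)

theorem isConvexCone_polar (s : Set V) : IsConvexCone {x : V | ∀ a ∈ s, ⟪a, x⟫ ≤ 0} := by
  refine isConvexCone_of (by simp) ?_ ?_
  · intro x hx y hy a ha
    rw [inner_add_right]
    linarith [hx a ha, hy a ha]
  · intro c hc x hx a ha
    rw [inner_smul_right]
    exact mul_nonpos_of_nonneg_of_nonpos hc (hx a ha)

/-- Fourier–Motzkin elimination of `t` from the system `t ≥ 0`, `⟪a, x - t g⟫ ≤ 0` (`a ∈ s`). -/
theorem fourier_motzkin (s : Finset V) (g : V) : ∃ s' : Finset V, ∀ x : V,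
    (∀ a ∈ s', ⟪a, x⟫ ≤ 0) ↔ ∃ t : ℝ, 0 ≤ t ∧ ∀ a ∈ s, ⟪a, x - t • g⟫ ≤ 0 := by
  classical
  let N := s.filter fun a => ⟪a, g⟫ ≤ 0
  let B := s.filter fun a => 0 < ⟪a, g⟫
  refine ⟨N ∪ (N ×ˢ B).image fun q => ⟪q.2, g⟫ • q.1 - ⟪q.1, g⟫ • q.2, fun x => ?_⟩
  simp only [inner_sub_right, inner_smul_right]
  constructor
  · intro h
    have h1 : ∀ a ∈ s, ⟪a, g⟫ ≤ 0 → ⟪a, x⟫ ≤ 0 := fun a ha hag =>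
      h a (Finset.mem_union_left _ (Finset.mem_filter.2 ⟨ha, hag⟩))
    have h2 : ∀ a ∈ s, ⟪a, g⟫ ≤ 0 → ∀ b ∈ s, 0 < ⟪b, g⟫ →
        ⟪b, g⟫ * ⟪a, x⟫ - ⟪a, g⟫ * ⟪b, x⟫ ≤ 0 := by
      intro a ha hag b hb hbg
      have := h (⟪b, g⟫ • a - ⟪a, g⟫ • b) (Finset.mem_union_right _ (Finset.mem_image.2
        ⟨(a, b), Finset.mem_product.2 ⟨Finset.mem_filter.2 ⟨ha, hag⟩,
          Finset.mem_filter.2 ⟨hb, hbg⟩⟩, rfl⟩))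
      rwa [inner_sub_left, real_inner_smul_left, real_inner_smul_left] at this
    -- the smallest admissible value of `t`
    obtain ⟨t, ht, hmax⟩ := Finset.exists_max_image
      (insert (0 : ℝ) (B.image fun b => ⟪b, x⟫ / ⟪b, g⟫)) id (Finset.insert_nonempty _ _)
    have ht0 : 0 ≤ t := hmax 0 (Finset.mem_insert_self _ _)
    refine ⟨t, ht0, fun a ha => ?_⟩
    rcases le_or_gt ⟪a, g⟫ 0 with hag | hag
    · rcases Finset.mem_insert.1 ht with rfl | ht
      · simpa using h1 a ha hag
      · obtain ⟨b, hb, rfl⟩ := Finset.mem_image.1 ht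
        obtain ⟨hb, hbg⟩ := Finset.mem_filter.1 hb
        have := h2 a ha hag b hb hbg
        have e : ⟪a, x⟫ - ⟪b, x⟫ / ⟪b, g⟫ * ⟪a, g⟫
            = (⟪b, g⟫ * ⟪a, x⟫ - ⟪a, g⟫ * ⟪b, x⟫) / ⟪b, g⟫ := by
          field_simp
        rw [e]
        exact div_nonpos_of_nonpos_of_nonneg this hbg.le
    · have := hmax (⟪a, x⟫ / ⟪a, g⟫) (Finset.mem_insert_of_mem (Finset.mem_image.2
        ⟨a, Finset.mem_filter.2 ⟨ha, hag⟩, rfl⟩))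
      have := (div_le_iff₀ hag).1 this
      simp only [id] at this
      linarith
  · rintro ⟨t, ht, h⟩ a ha
    rcases Finset.mem_union.1 ha with ha | ha
    · obtain ⟨ha, hag⟩ := Finset.mem_filter.1 ha
      have := h a ha
      nlinarith
    · obtain ⟨⟨a, b⟩, hab, rfl⟩ := Finset.mem_image.1 ha
      obtain ⟨ha, hb⟩ := Finset.mem_product.1 hab
      obtain ⟨ha, hag⟩ := Finset.mem_filter.1 ha
      obtain ⟨hb, hbg⟩ := Finset.mem_filter.1 hb
      have h1 := h a ha
      have h2 := h b hb
      simp only at hag hbg h1 h2 ⊢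
      rw [inner_sub_left, real_inner_smul_left, real_inner_smul_left]
      nlinarith [mul_nonneg hbg.le (sub_nonneg.2 h1), mul_nonneg (neg_nonneg.2 hag)
        (sub_nonneg.2 h2)]

theorem coneGen_polyhedral (S : Finset V) :
    ∃ s : Finset V, coneGen (S : Set V) = {x | ∀ a ∈ s, ⟪a, x⟫ ≤ 0} := by
  classical
  induction S using Finset.induction_on with
  | empty =>
    let b := stdOrthonormalBasis ℝ V
    refine ⟨Finset.univ.image b ∪ Finset.univ.image (fun i => - b i), ?_⟩
    have h0 : coneGen (((∅ : Finset V) : Set V)) = {0} :=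
      Set.Subset.antisymm
        (coneGen_min (isConvexCone_of rfl (by simp) (by simp)) (by simp))
        (by simpa using (isConvexCone_coneGen _).1)
    rw [h0]
    ext x
    constructor
    · rintro rfl
      simp
    · intro h
      refine InnerProductSpace.ext_inner_left_basis (𝕜 := ℝ) b.toBasis fun i => ?_
      have h1 := h (b i) (by simp)
      have h2 := h (-b i) (by simp)
      rw [inner_neg_left] at h2
      simp only [OrthonormalBasis.coe_toBasis, inner_zero_right]
      linarith
  | insert g S _ ih =>
    obtain ⟨s, hs⟩ := ih
    obtain ⟨s', hs'⟩ := fourier_motzkin s g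
    refine ⟨s', ?_⟩
    have hD : {x | ∀ a ∈ s', ⟪a, x⟫ ≤ 0}
        = {x | ∃ t : ℝ, 0 ≤ t ∧ x - t • g ∈ coneGen (S : Set V)} := by
      ext x
      rw [hs]
      exact hs' x
    apply Set.Subset.antisymm
    · refine coneGen_min (isConvexCone_polar (s' : Set V)) ?_
      rw [hD]
      intro x hx
      rcases Finset.mem_insert.1 hx with rfl | hx
      · exact ⟨1, zero_le_one, by simpa using (isConvexCone_coneGen _).1⟩
      · exact ⟨0, le_rfl, by simpa using subset_coneGen _ hx⟩
    · rw [hD]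
      rintro x ⟨t, ht, hx⟩
      have hC := isConvexCone_coneGen ((insert g S : Finset V) : Set V)
      have hsub : coneGen (S : Set V) ⊆ coneGen ((insert g S : Finset V) : Set V) :=
        coneGen_min hC fun y hy => subset_coneGen _ (Finset.mem_insert_of_mem hy)
      have := hC.add_mem (hsub hx) (hC.2.2 t ht g (subset_coneGen _ (Finset.mem_insert_self g S)))
      simpa using this

/-! ### Faces, tangent cones and normal cones of a polytope -/

/-- The face of `Q` in direction `y`: the (possibly empty) set of maximizers of `⟪y, ·⟫` on `Q`. -/
def maxFace (Q : Set V) (y : V) : Set V := {x | x ∈ Q ∧ ∀ q ∈ Q, ⟪y, q⟫ ≤ ⟪y, x⟫}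

theorem isFace_maxFace {Q : Set V} {y : V} (h : (maxFace Q y).Nonempty) : IsFace Q (maxFace Q y) :=
  ⟨y, h, rfl⟩

theorem mem_normCone_maxFace (Q : Set V) (y : V) : y ∈ normCone Q (maxFace Q y) :=
  fun _ hv => hv.2

theorem isClosed_normCone (Q F : Set V) : IsClosed (normCone Q F) := by
  simp only [normCone, Set.ofPred_forall]
  refine isClosed_iInter fun v => isClosed_iInter fun _ => isClosed_iInter fun q =>
    isClosed_iInter fun _ => isClosed_le ?_ ?_ <;> fun_prop

theorem convex_normCone (Q F : Set V) : Convex ℝ (normCone Q F) := by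
  intro x hx y hy s t hs ht _ v hv q hq
  simp only [inner_add_left, real_inner_smul_left]
  nlinarith [mul_le_mul_of_nonneg_left (hx v hv q hq) hs,
    mul_le_mul_of_nonneg_left (hy v hv q hq) ht]

theorem zero_mem_normCone (Q F : Set V) : (0 : V) ∈ normCone Q F := by
  intro v _ q _
  simp

theorem smul_mem_normCone {Q F : Set V} {y : V} (hy : y ∈ normCone Q F) {c : ℝ} (hc : 0 ≤ c) :
    c • y ∈ normCone Q F := by
  intro v hv q hq
  simp only [real_inner_smul_left]
  exact mul_le_mul_of_nonneg_left (hy v hv q hq) hc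

/-- A face of `convexHull ℝ X` is spanned by the points of `X` lying on it, stated as: a linear
lower bound on those points is a lower bound on the whole face. -/
theorem face_bound {X : Set V} {y a : V} {m : ℝ}
    (h : ∀ x ∈ X, x ∈ maxFace (convexHull ℝ X) y → m ≤ ⟪a, x⟫) :
    ∀ x ∈ maxFace (convexHull ℝ X) y, m ≤ ⟪a, x⟫ := by
  intro x0 hx0
  have hsub : convexHull ℝ X ⊆
      {x | ⟪y, x⟫ ≤ ⟪y, x0⟫ ∧ (⟪y, x⟫ = ⟪y, x0⟫ → m ≤ ⟪a, x⟫)} := by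
    refine convexHull_min ?_ ?_
    · intro x hx
      have hxQ := subset_convexHull ℝ X hx
      exact ⟨hx0.2 x hxQ, fun e => h x hx ⟨hxQ, fun q hq => e ▸ hx0.2 q hq⟩⟩
    · intro u hu v hv s t hs ht hst
      obtain ⟨hu1, hu2⟩ := hu
      obtain ⟨hv1, hv2⟩ := hv
      simp only [Set.mem_ofPred_eq, inner_add_right, inner_smul_right]
      have e : t = 1 - s := by linarith
      refine ⟨by subst e; nlinarith, fun heq => ?_⟩
      rcases hs.eq_or_lt with rfl | hs
      · have : t = 1 := by linarith
        subst this
        simp only [zero_mul, one_mul, zero_add] at heq ⊢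
        exact hv2 heq
      rcases ht.eq_or_lt with rfl | ht
      · have : s = 1 := by linarith
        subst this
        simp only [zero_mul, one_mul, add_zero] at heq ⊢
        exact hu2 heq
      have h1 : ⟪y, u⟫ = ⟪y, x0⟫ := by subst e; nlinarith
      have h2 : ⟪y, v⟫ = ⟪y, x0⟫ := by subst e; nlinarith
      have h1 := hu2 h1
      have h2 := hv2 h2
      subst e
      nlinarith
  exact (hsub hx0.1).2 rfl

theorem finite_faces {X : Set V} (hX : X.Finite) : {F | IsFace (convexHull ℝ X) F}.Finite := by
  refine Set.Finite.of_finite_image (f := fun F => X ∩ F)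
    (hX.finite_subsets.subset ?_) ?_
  · rintro _ ⟨F, _, rfl⟩
    exact Set.inter_subset_left
  · have key : ∀ y y' : V, (maxFace (convexHull ℝ X) y').Nonempty →
        X ∩ maxFace (convexHull ℝ X) y = X ∩ maxFace (convexHull ℝ X) y' →
        maxFace (convexHull ℝ X) y ⊆ maxFace (convexHull ℝ X) y' := by
      rintro y y' ⟨x', hx'⟩ he x hx
      have := face_bound (m := ⟪y', x'⟫) (a := y') (y := y) (X := X) (fun z hz hz' => by
        have : z ∈ X ∩ maxFace (convexHull ℝ X) y' := he ▸ ⟨hz, hz'⟩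
        exact this.2.2 x' hx'.1) x hx
      exact ⟨hx.1, fun q hq => (hx'.2 q hq).trans this⟩
    rintro F ⟨y, hF, rfl⟩ G ⟨y', hG, rfl⟩ he
    exact Set.Subset.antisymm (key y y' hG he) (key y' y hF he.symm)

theorem tanCone_polyhedral {X : Set V} (hX : X.Finite) {F : Set V}
    (hF : IsFace (convexHull ℝ X) F) :
    ∃ s : Finset V, tanCone (convexHull ℝ X) F = {x | ∀ a ∈ s, ⟪a, x⟫ ≤ 0} := by
  obtain ⟨y, -, rfl⟩ := hF
  change ∃ s : Finset V, tanCone _ (maxFace _ y) = _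
  have hfin : {d | ∃ q ∈ X, ∃ v ∈ X ∩ maxFace (convexHull ℝ X) y, d = q - v}.Finite := by
    refine ((hX.prod (hX.inter_of_left (maxFace (convexHull ℝ X) y))).image
      fun q : V × V => q.1 - q.2).subset ?_
    rintro _ ⟨q, hq, v, hv, rfl⟩
    exact ⟨(q, v), ⟨hq, hv⟩, rfl⟩
  obtain ⟨s, hs⟩ := coneGen_polyhedral hfin.toFinset
  rw [hfin.coe_toFinset] at hs
  refine ⟨s, ?_⟩
  apply Set.Subset.antisymm
  · refine coneGen_min (isConvexCone_polar (s : Set V)) ?_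
    rintro _ ⟨q, hq, v, hv, rfl⟩ a ha
    rw [inner_sub_right, sub_nonpos]
    refine face_bound (fun x hx hxF => ?_) v hv
    refine convexHull_min (t := {q | ⟪a, q⟫ ≤ ⟪a, x⟫}) (fun q hq => ?_) ?_ hq
    · have : q - x ∈ {x | ∀ a ∈ s, ⟪a, x⟫ ≤ 0} :=
        hs ▸ subset_coneGen _ ⟨q, hq, x, ⟨hx, hxF⟩, rfl⟩
      have := this a ha
      rwa [inner_sub_right, sub_nonpos] at this
    · exact convex_halfSpace_le (innerₛₗ ℝ a).isLinear _
  · rw [← hs]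
    refine coneGen_min (isConvexCone_coneGen _) ?_
    rintro _ ⟨q, hq, v, hv, rfl⟩
    exact subset_coneGen _ ⟨q, subset_convexHull ℝ X hq, v, hv.2, rfl⟩

theorem sub_mem_tanCone {Q F : Set V} {q v : V} (hq : q ∈ Q) (hv : v ∈ F) : q - v ∈ tanCone Q F :=
  subset_coneGen _ ⟨q, hq, v, hv, rfl⟩

/-- The tangent cone is the polar of the normal cone. -/
theorem mem_tanCone_iff {X : Set V} (hX : X.Finite) {F : Set V}
    (hF : IsFace (convexHull ℝ X) F) (x : V) :
    x ∈ tanCone (convexHull ℝ X) F ↔ ∀ y ∈ normCone (convexHull ℝ X) F, ⟪y, x⟫ ≤ 0 := by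
  constructor
  · intro hx y hy
    refine coneGen_min (isConvexCone_polar {y}) ?_ hx y rfl
    rintro _ ⟨q, hq, v, hv, rfl⟩ _ rfl
    rw [inner_sub_right, sub_nonpos]
    exact hy v hv q hq
  · intro h
    obtain ⟨s, hs⟩ := tanCone_polyhedral hX hF
    rw [hs]
    intro a ha
    refine h a fun v hv q hq => ?_
    have := sub_mem_tanCone hq hv
    rw [hs] at this
    have := this a ha
    rwa [inner_sub_right, sub_nonpos] at this

/-- The normal cones of a polytope are closed under intersection: `N_F ∩ N_G = N_H` for `H` the
smallest face of the form `maxFace Q y` with `y ∈ N_F ∩ N_G`. -/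
theorem normCone_inter {X : Set V} (hX : X.Finite) {F G : Set V}
    (hF : IsFace (convexHull ℝ X) F) (hG : IsFace (convexHull ℝ X) G) :
    ∃ H, IsFace (convexHull ℝ X) H ∧
      normCone (convexHull ℝ X) F ∩ normCone (convexHull ℝ X) G = normCone (convexHull ℝ X) H := by
  set Q := convexHull ℝ X with hQ
  have hsubF : ∀ {E : Set V}, IsFace Q E → E ⊆ Q := by
    rintro _ ⟨_, _, rfl⟩ x hx
    exact hx.1
  have hne : F.Nonempty := by
    obtain ⟨_, h, _⟩ := hF
    exact h
  have hface : ∀ y ∈ normCone Q F, (maxFace Q y).Nonempty := by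
    intro y hy
    obtain ⟨x, hx⟩ := hne
    exact ⟨x, hsubF hF hx, hy x hx⟩
  obtain ⟨H, hH⟩ := Set.Finite.exists_minimal
    (s := {H | ∃ y ∈ normCone Q F ∩ normCone Q G, H = maxFace Q y})
    ((finite_faces hX).subset (by
      rintro _ ⟨y, hy, rfl⟩
      exact isFace_maxFace (hface y hy.1)))
    ⟨_, 0, ⟨zero_mem_normCone _ _, zero_mem_normCone _ _⟩, rfl⟩
  obtain ⟨⟨y, hy, rfl⟩, hmin⟩ := hH
  refine ⟨maxFace Q y, isFace_maxFace (hface y hy.1), Set.Subset.antisymm ?_ ?_⟩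
  · rintro z hz
    have hyz : y + z ∈ normCone Q F ∩ normCone Q G := by
      refine ⟨fun v hv q hq => ?_, fun v hv q hq => ?_⟩
      · rw [inner_add_left, inner_add_left]
        linarith [hy.1 v hv q hq, hz.1 v hv q hq]
      · rw [inner_add_left, inner_add_left]
        linarith [hy.2 v hv q hq, hz.2 v hv q hq]
    obtain ⟨f, hf⟩ := hne
    have hfQ := hsubF hF hf
    have hmem : ∀ x ∈ maxFace Q (y + z), x ∈ maxFace Q y ∧ x ∈ maxFace Q z := by
      intro x hx
      have h1 := hx.2 f hfQ
      rw [inner_add_left, inner_add_left] at h1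
      have h2 := hy.1 f hf x hx.1
      have h3 := hz.1 f hf x hx.1
      exact ⟨⟨hx.1, fun q hq => by linarith [hy.1 f hf q hq]⟩,
        ⟨hx.1, fun q hq => by linarith [hz.1 f hf q hq]⟩⟩
    have hle := hmin ⟨y + z, hyz, rfl⟩ (fun x hx => (hmem x hx).1)
    intro v hv q hq
    exact (hmem v (hle hv)).2.2 q hq
  · intro z hz
    exact ⟨fun v hv q hq => hz v ⟨hsubF hF hv, hy.1 v hv⟩ q hq,
      fun v hv q hq => hz v ⟨hsubF hG hv, hy.2 v hv⟩ q hq⟩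

/-! ### Translated tangent cones and tight containment -/

theorem mem_transl {v x : V} {C : Set V} : x ∈ transl v C ↔ x - v ∈ C := by
  constructor
  · rintro ⟨c, hc, rfl⟩
    simpa using hc
  · intro h
    exact ⟨x - v, h, by simp⟩

theorem isConvexCone_tanCone (Q F : Set V) : IsConvexCone (tanCone Q F) := isConvexCone_coneGen _

theorem mem_transl_self {C : Set V} (hC : IsConvexCone C) (v : V) : v ∈ transl v C := by
  rw [mem_transl, sub_self]
  exact hC.1

/-- The apexes of `v + C` form the coset `v + lineal C`. -/
theorem transl_eq_iff {C : Set V} (hC : IsConvexCone C) {v w : V} :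
    transl v C = transl w C ↔ w - v ∈ lineal C := by
  have key : ∀ {v w : V}, v - w ∈ C → transl v C ⊆ transl w C := by
    intro v w h x hx
    rw [mem_transl] at hx ⊢
    simpa using hC.add_mem hx h
  constructor
  · intro h
    refine ⟨mem_transl.1 (h ▸ mem_transl_self hC w), ?_⟩
    rw [Set.mem_neg, neg_sub]
    exact mem_transl.1 (h ▸ mem_transl_self hC v)
  · rintro ⟨h1, h2⟩
    rw [Set.mem_neg, neg_sub] at h2
    exact Set.Subset.antisymm (key h2) (key h1)

/-- A cone is the recession cone of its translates, hence is determined by any of them. -/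
theorem cone_eq_of_transl_eq {C D : Set V} (hC : IsConvexCone C) (hD : IsConvexCone D) {v w : V}
    (h : transl v C = transl w D) : C = D := by
  have key : ∀ {C : Set V} (v : V), IsConvexCone C →
      C = {d | ∀ t ∈ transl v C, t + d ∈ transl v C} := by
    intro C v hC
    ext d
    constructor
    · intro hd t ht
      rw [mem_transl] at ht ⊢
      rw [add_sub_right_comm]
      exact hC.add_mem ht hd
    · intro hd
      simpa [mem_transl] using hd v (mem_transl_self hC v)
  rw [key v hC, key w hD, h]

theorem tctight_iff {Q T P : Set V} : TCtight Q T P ↔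
    ∃ F x, IsFace Q F ∧ x ∈ P ∧ T = transl x (tanCone Q F) ∧ P ⊆ T := by
  constructor
  · rintro ⟨F, v, hF, rfl, hsub, x, hxP, hx⟩
    exact ⟨F, x, hF, hxP, (transl_eq_iff (isConvexCone_tanCone Q F)).2 (mem_transl.1 hx), hsub⟩
  · rintro ⟨F, x, hF, hxP, rfl, hsub⟩
    refine ⟨F, x, hF, rfl, hsub, x, hxP, ?_⟩
    rw [mem_transl, ← transl_eq_iff (isConvexCone_tanCone Q F)]

/-- Each tangent cone of `Q` has at most one translate tightly containing `P`. -/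
theorem finite_tight {X : Set V} (hX : X.Finite) (P : Set V) :
    {T : ↥(TranslSet (convexHull ℝ X)) | TCtight (convexHull ℝ X) T.1 P}.Finite := by
  set Q := convexHull ℝ X with hQ
  have hfin : Finite {F | IsFace Q F} := finite_faces hX
  have h : ∀ T : {T : ↥(TranslSet Q) | TCtight Q T.1 P}, ∃ F : {F | IsFace Q F},
      ∃ x ∈ P, T.1.1 = transl x (tanCone Q F) ∧ P ⊆ T.1.1 := by
    rintro ⟨T, hT⟩
    obtain ⟨F, x, hF, h⟩ := tctight_iff.1 hT
    exact ⟨⟨F, hF⟩, x, h⟩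
  choose g hg using h
  refine @Set.toFinite _ _ (Finite.of_injective g ?_)
  intro T T' he
  obtain ⟨x, hx, hT, hsub⟩ := hg T
  obtain ⟨x', hx', hT', hsub'⟩ := hg T'
  rw [← he] at hT'
  apply Subtype.ext
  apply Subtype.ext
  have h1 : x' - x ∈ tanCone Q (g T) := mem_transl.1 (hT ▸ hsub hx')
  have h2 : x - x' ∈ tanCone Q (g T) := mem_transl.1 (hT' ▸ hsub' hx)
  rw [hT, hT', transl_eq_iff (isConvexCone_tanCone Q _)]
  exact ⟨h1, by rwa [Set.mem_neg, neg_sub]⟩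

/-- The normal cone of a face of `Q` lies in a single normal cone of an extended deformation. -/
theorem extDef_maxFace {Q P : Set V} (hP : IsExtDef Q P) {y v z : V} (hv : v ∈ maxFace P y)
    (hz : z ∈ normCone Q (maxFace Q y)) : v ∈ maxFace P z := by
  obtain ⟨𝒢, h𝒢, he⟩ := hP.2 (maxFace P y) (isFace_maxFace ⟨v, hv⟩)
  have hy : y ∈ normCone P (maxFace P y) := mem_normCone_maxFace P y
  rw [he] at hy
  obtain ⟨G, hG, hyG⟩ := Set.mem_iUnion₂.1 hy
  have hzG : z ∈ normCone Q G := by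
    intro g hg q hq
    have hgQ : g ∈ Q := by
      obtain ⟨_, _, rfl⟩ := h𝒢 G hG
      exact hg.1
    exact hz g ⟨hgQ, hyG g hg⟩ q hq
  have : z ∈ normCone P (maxFace P y) := by
    rw [he]
    exact Set.mem_iUnion₂.2 ⟨G, hG, hzG⟩
  exact ⟨hv.1, this v hv⟩

theorem isClosed_of_extDef {Q P : Set V} (hP : IsExtDef Q P) : IsClosed P := by
  obtain ⟨⟨-, s, rfl⟩, -⟩ := hP
  simp only [Set.ofPred_forall]
  exact isClosed_iInter fun p => isClosed_iInter fun _ => isClosed_le (by fun_prop) (by fun_prop)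

theorem convex_of_extDef {Q P : Set V} (hP : IsExtDef Q P) : Convex ℝ P := by
  obtain ⟨⟨-, s, rfl⟩, -⟩ := hP
  simp only [Set.ofPred_forall]
  exact convex_iInter fun p => convex_iInter fun _ =>
    convex_halfSpace_le (innerₛₗ ℝ p.1).isLinear _

/-- Translated tangent cones are extended deformations: the normal cone of `v + C_F(Q)` at its face
in direction `y` is the normal cone of `Q` at the face in direction `y`. -/
theorem extDef_transl {X : Set V} (hX : X.Finite) {F : Set V} (hF : IsFace (convexHull ℝ X) F)
    (v : V) : IsExtDef (convexHull ℝ X) (transl v (tanCone (convexHull ℝ X) F)) := by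
  classical
  have hcone := isConvexCone_tanCone (convexHull ℝ X) F
  refine ⟨⟨⟨v, mem_transl_self hcone v⟩, ?_⟩, ?_⟩
  · obtain ⟨s, hs⟩ := tanCone_polyhedral hX hF
    refine ⟨s.image fun a => (a, ⟪a, v⟫), ?_⟩
    ext x
    rw [mem_transl, hs]
    simp [inner_sub_right]
  · set Q := convexHull ℝ X with hQ
    rintro _ ⟨y, hne, rfl⟩
    change (maxFace (transl v (tanCone Q F)) y).Nonempty at hne
    obtain ⟨x, hx, hxmax⟩ := hne
    have hsubF : F ⊆ Q := by
      obtain ⟨_, _, rfl⟩ := hF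
      exact fun x hx => hx.1
    obtain ⟨f0, hf0⟩ : F.Nonempty := by
      obtain ⟨_, h, _⟩ := hF
      exact h
    have hneg : ∀ c ∈ tanCone Q F, ⟪y, c⟫ ≤ 0 := by
      intro c hc
      have := hxmax (x + c) (by
        rw [mem_transl] at hx ⊢
        rw [add_sub_right_comm]
        exact hcone.add_mem hx hc)
      rw [inner_add_right] at this
      linarith
    have hyF : y ∈ normCone Q F := by
      intro f hf q hq
      have := hneg _ (sub_mem_tanCone hq hf)
      rwa [inner_sub_right, sub_nonpos] at this
    have hFG : F ⊆ maxFace Q y := fun f hf => ⟨hsubF hf, hyF f hf⟩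
    have hvmax : v ∈ maxFace (transl v (tanCone Q F)) y := by
      refine ⟨mem_transl_self hcone v, fun t ht => ?_⟩
      have := hneg _ (mem_transl.1 ht)
      rwa [inner_sub_right, sub_nonpos] at this
    refine ⟨{maxFace Q y}, ?_, ?_⟩
    · rintro _ rfl
      exact isFace_maxFace ⟨f0, hFG hf0⟩
    rw [Set.biUnion_singleton]
    change normCone _ (maxFace (transl v (tanCone Q F)) y) = _
    apply Set.Subset.antisymm
    · intro z hz g hg q hq
      have hgq := hFG hf0
      have h1 : v + (g - f0) ∈ maxFace (transl v (tanCone Q F)) y := by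
        refine ⟨⟨_, sub_mem_tanCone hg.1 hf0, rfl⟩, fun t ht => ?_⟩
        have h2 := hvmax.2 t ht
        have h3 := hg.2 f0 hgq.1
        rw [inner_add_right, inner_sub_right]
        linarith
      have h2 := hz _ h1 (v + (q - f0)) ⟨_, sub_mem_tanCone hq hf0, rfl⟩
      simp only [inner_add_right, inner_sub_right] at h2
      linarith
    · intro z hz
      have hzF : ∀ f ∈ F, ∀ q ∈ Q, ⟪z, q⟫ ≤ ⟪z, f⟫ := fun f hf q hq => hz f (hFG hf) q hq
      have hD : tanCone Q F ⊆
          {h | ⟪y, h⟫ ≤ 0 ∧ ⟪z, h⟫ ≤ 0 ∧ (⟪y, h⟫ = 0 → ⟪z, h⟫ = 0)} := by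
        refine coneGen_min (isConvexCone_of (by simp) ?_ ?_) ?_
        · rintro a ⟨ha1, ha2, ha3⟩ b ⟨hb1, hb2, hb3⟩
          simp only [Set.mem_ofPred_eq, inner_add_right]
          refine ⟨by linarith, by linarith, fun h => ?_⟩
          rw [ha3 (by linarith), hb3 (by linarith), add_zero]
        · rintro c hc a ⟨ha1, ha2, ha3⟩
          simp only [Set.mem_ofPred_eq, inner_smul_right]
          refine ⟨mul_nonpos_of_nonneg_of_nonpos hc ha1, mul_nonpos_of_nonneg_of_nonpos hc ha2,
            fun h => ?_⟩
          rcases mul_eq_zero.1 h with h | h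
          · rw [h, zero_mul]
          · rw [ha3 h, mul_zero]
        · rintro _ ⟨q, hq, f, hf, rfl⟩
          simp only [Set.mem_ofPred_eq, inner_sub_right]
          refine ⟨by linarith [hyF f hf q hq], by linarith [hzF f hf q hq], fun h => ?_⟩
          have hqG : q ∈ maxFace Q y := ⟨hq, fun r hr => by linarith [hyF f hf r hr]⟩
          linarith [hz q hqG f (hsubF hf), hzF f hf q hq]
      intro h hh t ht
      have h1 := hD (mem_transl.1 hh.1)
      have h2 := hD (mem_transl.1 ht)
      have h3 := hh.2 v hvmax.1
      simp only [Set.mem_ofPred_eq, inner_sub_right] at h1 h2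
      linarith [h1.2.2 (by linarith), h2.2.1]

/-! ### Valuativity of tight containment -/

/-- If `⟪y, ·⟫ = c` on the convex set `L`, then `P ↦ [P ∩ L ≠ ∅ and ⟪y, ·⟫ ≤ c on P]` respects
linear relations among closed convex sets. For a given relation it equals
`[P ∩ K ≠ ∅] - [P ∩ K' ≠ ∅]` with `K ⊆ L` the hull of sample points of the `P i ∩ L`, and `K'` a
hull of points of the `P i` close to `K` at which `⟪y, ·⟫ = c + s` for a small `s > 0`. -/
theorem tight_valuation {ι : Type*} [Fintype ι] (a : ι → ℤ) (P : ι → Set V) (L : Set V) (y : V)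
    (c : ℝ) (hP : ∀ i, IsClosed (P i)) (hPc : ∀ i, Convex ℝ (P i)) (hL : Convex ℝ L)
    (hy : ∀ x ∈ L, ⟪y, x⟫ = c) (h : ∀ x, ∑ i, a i * iv (x ∈ P i) = 0) :
    ∑ i, a i * iv ((P i ∩ L).Nonempty ∧ ∀ q ∈ P i, ⟪y, q⟫ ≤ c) = 0 := by
  let I1 : ι → Prop := fun i => (P i ∩ L).Nonempty
  let I2 : ι → Prop := fun i => I1 i ∧ ∃ q ∈ P i, c < ⟪y, q⟫
  have h1 : ∀ i, I1 i → ∃ x, x ∈ P i ∩ L := fun i hi => hi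
  have h2 : ∀ i, I2 i → ∃ z, z ∈ P i ∧ c < ⟪y, z⟫ := fun i hi => hi.2
  choose! x hx using h1
  choose! z hz using h2
  let K := convexHull ℝ (x '' {i | I1 i})
  have hKcomp : IsCompact K := (Set.toFinite _).isCompact_convexHull ℝ
  have hKL : K ⊆ L := by
    refine convexHull_min ?_ hL
    rintro _ ⟨i, hi, rfl⟩
    exact (hx i hi).2
  have hxK : ∀ i, I1 i → x i ∈ K := fun i hi => subset_convexHull ℝ _ ⟨i, hi, rfl⟩
  have hK1 : ∀ i, (P i ∩ K).Nonempty ↔ I1 i := fun i =>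
    ⟨fun ⟨u, hu, hu'⟩ => ⟨u, hu, hKL hu'⟩, fun hi => ⟨x i, (hx i hi).1, hxK i hi⟩⟩
  have hthick : ∀ j, ∃ δ : ℝ, 0 < δ ∧ (¬ I1 j → Disjoint (P j) (Metric.thickening δ K)) := by
    intro j
    by_cases hj : I1 j
    · exact ⟨1, one_pos, fun h => absurd hj h⟩
    · have hd : Disjoint K (P j) := by
        rw [Set.disjoint_left]
        exact fun u hu hu' => hj ((hK1 j).1 ⟨u, hu', hu⟩)
      obtain ⟨δ, hδ, hdis⟩ := hd.exists_thickenings hKcomp (hP j)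
      exact ⟨δ, hδ, fun _ => hdis.symm.mono_left (Metric.self_subset_thickening hδ _)⟩
  choose δ hδ hdis using hthick
  let w : ℝ → ι → V := fun s i => x i + (s / (⟪y, z i⟫ - c)) • (z i - x i)
  have hw1 : ∀ i, I2 i → ∀ᶠ s in nhdsWithin (0 : ℝ) (Set.Ioi 0), w s i ∈ P i := by
    intro i hi
    have hpos : 0 < ⟪y, z i⟫ - c := sub_pos.2 (hz i hi).2
    filter_upwards [Ioo_mem_nhdsGT hpos] with s hs
    exact (hPc i).add_smul_sub_mem (hx i hi.1).1 (hz i hi).1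
      ⟨div_nonneg hs.1.le hpos.le, (div_le_one hpos).2 hs.2.le⟩
  have hw2 : ∀ i, I2 i → ∀ j, ∀ᶠ s in nhdsWithin (0 : ℝ) (Set.Ioi 0),
      w s i ∈ Metric.thickening (δ j) K := by
    intro i hi j
    have hcont : Continuous fun s => w s i := by fun_prop
    refine nhdsWithin_le_nhds (hcont.continuousAt.preimage_mem_nhds ?_)
    have : w 0 i = x i := by simp [w]
    rw [this]
    exact Metric.isOpen_thickening.mem_nhds (Metric.self_subset_thickening (hδ j) _ (hxK i hi.1))
  have hev : ∀ᶠ s in nhdsWithin (0 : ℝ) (Set.Ioi 0), 0 < s ∧ (∀ i, I2 i → w s i ∈ P i) ∧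
      ∀ i, I2 i → ∀ j, w s i ∈ Metric.thickening (δ j) K := by
    refine Filter.Eventually.and self_mem_nhdsWithin (Filter.Eventually.and ?_ ?_)
    · simpa only [Filter.eventually_all] using hw1
    · simpa only [Filter.eventually_all] using hw2
  obtain ⟨s, hs, hsP, hsK⟩ := hev.exists
  have hws : ∀ i, I2 i → ⟪y, w s i⟫ = c + s := by
    intro i hi
    have hpos : 0 < ⟪y, z i⟫ - c := sub_pos.2 (hz i hi).2
    simp only [w, inner_add_right, inner_smul_right, inner_sub_right, hy _ (hx i hi.1).2]
    rw [div_mul_cancel₀ _ hpos.ne']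
  let K' := convexHull ℝ (w s '' {i | I2 i})
  have hK'comp : IsCompact K' := (Set.toFinite _).isCompact_convexHull ℝ
  have hK'y : ∀ u ∈ K', ⟪y, u⟫ = c + s := by
    intro u hu
    refine convexHull_min (t := {u | ⟪y, u⟫ = c + s}) ?_
      (convex_hyperplane (innerₛₗ ℝ y).isLinear _) hu
    rintro _ ⟨i, hi, rfl⟩
    exact hws i hi
  have hK2 : ∀ j, (P j ∩ K').Nonempty ↔ I2 j := by
    intro j
    constructor
    · rintro ⟨u, hu, hu'⟩
      refine ⟨?_, u, hu, by rw [hK'y u hu']; linarith⟩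
      by_contra hj
      refine Set.disjoint_left.1 (hdis j hj) hu ?_
      refine convexHull_min ?_ ((convex_convexHull ℝ _).thickening (δ j)) hu'
      rintro _ ⟨i, hi, rfl⟩
      exact hsK i hi j
    · intro hj
      exact ⟨w s j, hsP j hj, subset_convexHull ℝ _ ⟨j, hj, rfl⟩⟩
  have e1 := euler_inter a P K hP hPc hKcomp (convex_convexHull ℝ _) fun x _ => h x
  have e2 := euler_inter a P K' hP hPc hK'comp (convex_convexHull ℝ _) fun x _ => h x
  rw [← sub_zero (0 : ℤ)]
  nth_rewrite 1 [← e1]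
  rw [← e2, ← Finset.sum_sub_distrib]
  refine Finset.sum_congr rfl fun i _ => ?_
  rw [← mul_sub, iv_congr (hK1 i), iv_congr (hK2 i)]
  congr 1
  by_cases hi : I1 i
  · by_cases hq : ∃ q ∈ P i, c < ⟪y, q⟫
    · rw [iv_neg (by push Not; exact fun _ => hq), iv_pos hi, iv_pos (p := I2 i) ⟨hi, hq⟩, sub_self]
    · rw [iv_pos (by push Not at hq; exact ⟨hi, hq⟩), iv_pos hi, iv_neg fun h : I2 i => hq h.2,
        sub_zero]
  · rw [iv_neg (fun hh => hi hh.1), iv_neg hi, iv_neg fun h : I2 i => hi h.1, sub_zero]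

/-- Since the normal cone of `Q` at its face in direction `y` lies in one normal cone of `P`, tight
containment only has to be tested on the single functional `⟪y, ·⟫`. -/
theorem tctight_iff_of_extDef {X P : Set V} (hX : X.Finite) (hP : IsExtDef (convexHull ℝ X) P)
    {y v : V} (hne : (maxFace (convexHull ℝ X) y).Nonempty) :
    TCtight (convexHull ℝ X)
      (transl v (tanCone (convexHull ℝ X) (maxFace (convexHull ℝ X) y))) P ↔
    (P ∩ transl v (lineal (tanCone (convexHull ℝ X) (maxFace (convexHull ℝ X) y)))).Nonempty ∧
      ∀ q ∈ P, ⟪y, q⟫ ≤ ⟪y, v⟫ := by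
  set Q := convexHull ℝ X with hQ
  have hcone := isConvexCone_tanCone Q (maxFace Q y)
  have hface := isFace_maxFace hne
  have hyC : ∀ c ∈ tanCone Q (maxFace Q y), ⟪y, c⟫ ≤ 0 := fun c hc =>
    (mem_tanCone_iff hX hface c).1 hc y (mem_normCone_maxFace Q y)
  rw [tctight_iff]
  constructor
  · rintro ⟨F, x, hF, hxP, he, hsub⟩
    have hCD := cone_eq_of_transl_eq hcone (isConvexCone_tanCone Q F) he
    rw [← hCD] at he
    refine ⟨⟨x, hxP, mem_transl.2 ((transl_eq_iff hcone).1 he)⟩, fun q hq => ?_⟩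
    have := hyC _ (mem_transl.1 (hsub hq))
    rwa [inner_sub_right, sub_nonpos] at this
  · rintro ⟨⟨x, hxP, hx⟩, hmax⟩
    have hlin := mem_transl.1 hx
    have he := (transl_eq_iff hcone).2 hlin
    refine ⟨_, x, hface, hxP, he, ?_⟩
    have hyx : ⟪y, v⟫ ≤ ⟪y, x⟫ := by
      have := hyC _ hlin.2
      rw [inner_neg_right, inner_sub_right] at this
      linarith
    have hxF : x ∈ maxFace P y := ⟨hxP, fun q hq => (hmax q hq).trans hyx⟩
    intro q hq
    rw [he, mem_transl, mem_tanCone_iff hX hface]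
    intro z hz
    rw [inner_sub_right, sub_nonpos]
    exact (extDef_maxFace hP hxF hz).2 q hq

theorem tctight_valuation {ι : Type*} [Fintype ι] {X : Set V} (hX : X.Finite) (a : ι → ℤ)
    (P : ι → Set V) (hP : ∀ i, IsExtDef (convexHull ℝ X) (P i))
    (h : ∀ x, ∑ i, a i * iv (x ∈ P i) = 0) {T : Set V} (hT : T ∈ TranslSet (convexHull ℝ X)) :
    ∑ i, a i * iv (TCtight (convexHull ℝ X) T (P i)) = 0 := by
  obtain ⟨F, v, ⟨y, hne, rfl⟩, rfl⟩ := hT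
  have hface := isFace_maxFace hne
  have hcone := isConvexCone_tanCone (convexHull ℝ X) (maxFace (convexHull ℝ X) y)
  have key := tight_valuation a P
    (transl v (lineal (tanCone (convexHull ℝ X) (maxFace (convexHull ℝ X) y)))) y ⟪y, v⟫
    (fun i => isClosed_of_extDef (hP i)) (fun i => convex_of_extDef (hP i))
    (((hcone.2.1.inter hcone.2.1.neg)).translate v) ?_ h
  · rw [← key]
    refine Finset.sum_congr rfl fun i _ => ?_
    congr 1
    exact iv_congr (tctight_iff_of_extDef hX (hP i) hne)
  · intro x hx
    have hlin := mem_transl.1 hx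
    have h1 := (mem_tanCone_iff hX hface _).1 hlin.1 y (mem_normCone_maxFace _ y)
    have h2 := (mem_tanCone_iff hX hface _).1 hlin.2 y (mem_normCone_maxFace _ y)
    rw [inner_neg_right] at h2
    rw [inner_sub_right] at h1 h2
    linarith

/-! ### Extended deformations as combinations of translated tangent cones -/

theorem exists_proj {P : Set V} (hne : P.Nonempty) (hcl : IsClosed P) (hconv : Convex ℝ P)
    (u : V) : ∃ x ∈ P, ∀ q ∈ P, ⟪u - x, q - x⟫ ≤ 0 := by
  obtain ⟨x, hx, hmin⟩ := exists_norm_eq_iInf_of_complete_convex hne hcl.isComplete hconv u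
  exact ⟨x, hx, (norm_eq_iInf_iff_real_inner_le_zero hconv hx).1 hmin⟩

/-- The directions `y` for which `⟪y, ·⟫` attains its supremum on `P`. -/
def suppDirs (P : Set V) : Set V := {y | (maxFace P y).Nonempty}

/-- If the set of directions with attained supremum is closed, then every bounded linear functional
attains its supremum. Projecting `(n + 1) y` to a point `x` of `P` gives a direction
`(n + 1) y - x` with attained supremum, and `‖x‖² = O(n)` when `⟪y, ·⟫` is bounded on `P`. -/
theorem mem_suppDirs_of_bounded {P : Set V} (hne : P.Nonempty) (hcl : IsClosed P)
    (hconv : Convex ℝ P) (hS : IsClosed (suppDirs P)) {y : V} {M : ℝ}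
    (hM : ∀ q ∈ P, ⟪y, q⟫ ≤ M) : y ∈ suppDirs P := by
  choose x hxP hx using fun n : ℕ => exists_proj hne hcl hconv (((n : ℝ) + 1) • y)
  obtain ⟨p, hp⟩ := hne
  have hmem : ∀ n : ℕ, y - ((n : ℝ) + 1)⁻¹ • x n ∈ suppDirs P := by
    intro n
    have hn : (0 : ℝ) < (n : ℝ) + 1 := by positivity
    refine ⟨x n, hxP n, fun q hq => ?_⟩
    have h1 := hx n q hq
    have e : y - ((n : ℝ) + 1)⁻¹ • x n = ((n : ℝ) + 1)⁻¹ • (((n : ℝ) + 1) • y - x n) := by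
      rw [smul_sub, inv_smul_smul₀ hn.ne']
    rw [e, real_inner_smul_left, real_inner_smul_left]
    refine mul_le_mul_of_nonneg_left ?_ (inv_pos.2 hn).le
    rw [inner_sub_right] at h1
    linarith
  have hbound : ∀ n : ℕ, ‖((n : ℝ) + 1)⁻¹ • x n‖ ^ 2
      ≤ (2 * (M - ⟪y, p⟫) + ‖p‖ ^ 2) * (1 / ((n : ℝ) + 1)) := by
    intro n
    have hn : (1 : ℝ) ≤ (n : ℝ) + 1 := by simp
    set N : ℝ := (n : ℝ) + 1 with hN
    have h1 := hx n p hp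
    rw [inner_sub_left, inner_sub_right, inner_sub_right, real_inner_smul_left,
      real_inner_smul_left, real_inner_self_eq_norm_sq] at h1
    have h2 := hM _ (hxP n)
    have h3 := real_inner_le_norm (x n) p
    have h4 := sq_nonneg (‖x n‖ - ‖p‖)
    have h5 : ‖x n‖ ^ 2 ≤ 2 * N * (M - ⟪y, p⟫) + ‖p‖ ^ 2 := by nlinarith
    have h6 : ‖x n‖ ^ 2 ≤ (2 * (M - ⟪y, p⟫) + ‖p‖ ^ 2) * N := by nlinarith [sq_nonneg ‖p‖]
    have hN0 : 0 < N := by linarith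
    rw [norm_smul, mul_pow, norm_inv, Real.norm_of_nonneg hN0.le]
    rw [show (2 * (M - ⟪y, p⟫) + ‖p‖ ^ 2) * (1 / N)
      = N⁻¹ ^ 2 * ((2 * (M - ⟪y, p⟫) + ‖p‖ ^ 2) * N) by field_simp]
    exact mul_le_mul_of_nonneg_left h6 (by positivity)
  have hlim : Filter.Tendsto (fun n : ℕ => ‖((n : ℝ) + 1)⁻¹ • x n‖ ^ 2) Filter.atTop (nhds 0) := by
    refine squeeze_zero (fun n => by positivity) hbound ?_
    have h0 := (tendsto_one_div_add_atTop_nhds_zero_nat (𝕜 := ℝ)).const_mul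
      (2 * (M - ⟪y, p⟫) + ‖p‖ ^ 2)
    rwa [mul_zero] at h0
  have hlim2 : Filter.Tendsto (fun n : ℕ => ((n : ℝ) + 1)⁻¹ • x n) Filter.atTop (nhds 0) := by
    rw [tendsto_zero_iff_norm_tendsto_zero]
    simpa [Real.sqrt_sq] using hlim.sqrt
  refine hS.mem_of_tendsto (b := Filter.atTop)
    (f := fun n : ℕ => y - ((n : ℝ) + 1)⁻¹ • x n) ?_ (Filter.Eventually.of_forall hmem)
  simpa using hlim2.const_sub y

/-- If a finite family of sets is closed under intersection, the indicator of its union is an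
integer combination of its members' indicators. -/
theorem indic_iUnion_mem_span {α ι : Type*} [Finite ι] (N : ι → Set α)
    (hN : ∀ i j, ∃ k, N i ∩ N j = N k) :
    indic (⋃ i, N i) ∈ Submodule.span ℤ (Set.range fun i => indic (N i)) := by
  classical
  have := Fintype.ofFinite ι
  set M := Submodule.span ℤ (Set.range fun i => indic (N i)) with hM
  have hmul : ∀ j, ∀ f ∈ M, f * indic (N j) ∈ M := by
    intro j f hf
    induction hf using Submodule.span_induction with
    | mem f hf =>
      obtain ⟨i, rfl⟩ := hf
      obtain ⟨k, hk⟩ := hN i j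
      have : indic (N i) * indic (N j) = indic (N k) := by
        rw [← hk]
        exact (Set.inter_indicator_one).symm
      rw [this]
      exact Submodule.subset_span ⟨k, rfl⟩
    | zero => simp
    | add f g _ _ hf hg => rw [add_mul]; exact M.add_mem hf hg
    | smul c f _ hf => rw [smul_mul_assoc]; exact M.smul_mem c hf
  have key : ∀ s : Finset ι, indic (⋃ i ∈ s, N i) ∈ M := by
    intro s
    induction s using Finset.induction_on with
    | empty =>
      have : indic (⋃ i ∈ (∅ : Finset ι), N i) = 0 := by
        simp only [indic, Finset.notMem_empty, Set.iUnion_of_empty, Set.iUnion_empty,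
          Set.indicator_empty]
        rfl
      rw [this]
      exact M.zero_mem
    | insert j s _ ih =>
      have : indic (⋃ i ∈ insert j s, N i)
          = indic (N j) + indic (⋃ i ∈ s, N i) - indic (⋃ i ∈ s, N i) * indic (N j) := by
        rw [Finset.set_biUnion_insert]
        ext x
        simp only [Pi.add_apply, Pi.sub_apply, Pi.mul_apply, indic_apply, Set.mem_union]
        by_cases h1 : x ∈ N j <;> by_cases h2 : x ∈ ⋃ i ∈ s, N i <;> simp [iv, h1, h2]
      rw [this]
      exact M.sub_mem (M.add_mem (Submodule.subset_span ⟨j, rfl⟩) ih) (hmul j _ ih)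
  simpa using key Finset.univ

/-- A generalized Brianchon–Gram relation: if `∑ c_G 1_{N_G}` is the indicator of the directions of
attained supremum of `P`, then `1_P = ∑ c_G 1_{v_G + C_G}`, where `v_G ∈ P` maximizes all of `N_G`.
At a point `x` this compares the Euler characteristics of the pieces `N_G` of the convex set of
directions separating `x` from `P`. -/
theorem extDef_eq_sum {X P : Set V} (hX : X.Finite) (hP : IsExtDef (convexHull ℝ X) P) :
    ∃ (n : ℕ) (c : Fin n → ℤ) (T : Fin n → ↥(TranslSet (convexHull ℝ X))),
      ∀ x, iv (x ∈ P) = ∑ i, c i * iv (x ∈ (T i).1) := by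
  classical
  set Q := convexHull ℝ X with hQ
  have hcl := isClosed_of_extDef hP
  have hconv := convex_of_extDef hP
  have hne : P.Nonempty := hP.1.1
  let Idx := {G : Set V // IsFace Q G ∧ normCone Q G ⊆ suppDirs P}
  have hfin : Finite Idx :=
    ((finite_faces hX).subset fun G (hG : IsFace Q G ∧ normCone Q G ⊆ suppDirs P) => hG.1)
  have := Fintype.ofFinite Idx
  have hunion : suppDirs P = ⋃ G : Idx, normCone Q G.1 := by
    apply Set.Subset.antisymm
    · intro y hy
      obtain ⟨𝒢, h𝒢, he⟩ := hP.2 (maxFace P y) (isFace_maxFace hy)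
      have hyN : y ∈ normCone P (maxFace P y) := mem_normCone_maxFace P y
      rw [he] at hyN
      obtain ⟨G, hG, hyG⟩ := Set.mem_iUnion₂.1 hyN
      refine Set.mem_iUnion.2 ⟨⟨G, h𝒢 G hG, fun z hz => ?_⟩, hyG⟩
      have hzP : z ∈ normCone P (maxFace P y) := by
        rw [he]
        exact Set.mem_iUnion₂.2 ⟨G, hG, hz⟩
      obtain ⟨v, hv⟩ := hy
      exact ⟨v, hv.1, hzP v hv⟩
    · exact Set.iUnion_subset fun G => G.2.2
  have hSclosed : IsClosed (suppDirs P) := by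
    rw [hunion]
    exact isClosed_iUnion_of_finite fun G => isClosed_normCone _ _
  have hspan := indic_iUnion_mem_span (fun G : Idx => normCone Q G.1) (by
    rintro ⟨G, hG, hGS⟩ ⟨H, hH, hHS⟩
    obtain ⟨E, hE, he⟩ := normCone_inter hX hG hH
    exact ⟨⟨E, hE, he ▸ Set.inter_subset_left.trans hGS⟩, he⟩)
  rw [← hunion] at hspan
  obtain ⟨c, hc⟩ := (Submodule.mem_span_range_iff_exists_fun ℤ).1 hspan
  have hc' : ∀ y, ∑ G, c G * iv (y ∈ normCone Q G.1) = iv (y ∈ suppDirs P) := by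
    intro y
    rw [← indic_apply, ← hc, Finset.sum_apply]
    exact Finset.sum_congr rfl fun G _ => by rw [Pi.smul_apply, smul_eq_mul, indic_apply]
  have hv : ∀ G : Idx, ∃ v, v ∈ P ∧ ∀ z ∈ normCone Q G.1, v ∈ maxFace P z := by
    rintro ⟨G, hG, hGS⟩
    obtain ⟨y, hyne, rfl⟩ := hG
    obtain ⟨v, hv⟩ := hGS (mem_normCone_maxFace Q y)
    exact ⟨v, hv.1, fun z hz => extDef_maxFace hP hv hz⟩
  choose v hvP hv using hv
  let e := Fintype.equivFin Idx
  refine ⟨Fintype.card Idx, fun i => c (e.symm i), fun i => ⟨transl (v (e.symm i))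
    (tanCone Q (e.symm i).1), _, _, (e.symm i).2.1, rfl⟩, fun x => ?_⟩
  rw [e.symm.sum_comp (fun G : Idx => c G * iv (x ∈ transl (v G) (tanCone Q G.1)))]
  -- the directions separating `x` from `P`
  let U : Set V := {y | ∃ b, (∀ q ∈ P, ⟪y, q⟫ ≤ b) ∧ b < ⟪y, x⟫}
  have hUS : U ⊆ suppDirs P := fun y ⟨b, hb, _⟩ =>
    mem_suppDirs_of_bounded hne hcl hconv hSclosed hb
  have hUconv : Convex ℝ U := by
    rintro y ⟨b, hb, hbx⟩ y' ⟨b', hb', hbx'⟩ s t hs ht hst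
    refine ⟨s * b + t * b', fun q hq => ?_, ?_⟩
    · rw [inner_add_left, real_inner_smul_left, real_inner_smul_left]
      exact add_le_add (mul_le_mul_of_nonneg_left (hb q hq) hs)
        (mul_le_mul_of_nonneg_left (hb' q hq) ht)
    · rw [inner_add_left, real_inner_smul_left, real_inner_smul_left]
      have e : t = 1 - s := by linarith
      subst e
      rcases hs.eq_or_lt with rfl | hs
      · linarith
      · nlinarith [mul_lt_mul_of_pos_left hbx hs, mul_le_mul_of_nonneg_left hbx'.le ht]
  have hxU : x ∈ P ↔ ¬ U.Nonempty := by
    constructor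
    · rintro hx ⟨y, b, hb, hbx⟩
      linarith [hb x hx]
    · intro hU
      by_contra hx
      obtain ⟨x', hx', hproj⟩ := exists_proj hne hcl hconv x
      refine hU ⟨x - x', ⟪x - x', x'⟫, fun q hq => ?_, ?_⟩
      · have := hproj q hq
        rw [inner_sub_right] at this
        linarith
      · rw [← sub_pos, ← inner_sub_right, real_inner_self_pos]
        rw [sub_ne_zero]
        rintro rfl
        exact hx hx'
  have hTU : ∀ G : Idx, x ∈ transl (v G) (tanCone Q G.1) ↔ ¬ (normCone Q G.1 ∩ U).Nonempty := by
    intro G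
    rw [mem_transl, mem_tanCone_iff hX G.2.1]
    constructor
    · rintro h ⟨y, hy, b, hb, hbx⟩
      have h1 := h y hy
      rw [inner_sub_right] at h1
      linarith [hb _ (hvP G)]
    · intro h y hy
      by_contra hcon
      rw [inner_sub_right, sub_nonpos, not_le] at hcon
      exact h ⟨y, hy, _, (hv G y hy).2, hcon⟩
  have hu : ∀ G : Idx, (normCone Q G.1 ∩ U).Nonempty → ∃ u, u ∈ normCone Q G.1 ∩ U := fun G h => h
  choose! u hu using hu
  let K := convexHull ℝ (u '' {G | (normCone Q G.1 ∩ U).Nonempty})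
  have hKU : K ⊆ U := by
    refine convexHull_min ?_ hUconv
    rintro _ ⟨G, hG, rfl⟩
    exact (hu G hG).2
  have hKN : ∀ G : Idx, (normCone Q G.1 ∩ K).Nonempty ↔ (normCone Q G.1 ∩ U).Nonempty :=
    fun G => ⟨fun ⟨z, hz, hz'⟩ => ⟨z, hz, hKU hz'⟩,
      fun hG => ⟨u G, (hu G hG).1, subset_convexHull ℝ _ ⟨G, hG, rfl⟩⟩⟩
  have hKne : K.Nonempty ↔ U.Nonempty := by
    constructor
    · exact fun ⟨z, hz⟩ => ⟨z, hKU hz⟩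
    · rintro ⟨y, hy⟩
      have hyS := hUS hy
      rw [hunion] at hyS
      obtain ⟨G, hG⟩ := Set.mem_iUnion.1 hyS
      exact ((hKN G).2 ⟨y, hG, hy⟩).mono Set.inter_subset_right
  have heuler := euler_inter (ι := Option Idx) (fun o => o.elim (-1) c)
    (fun o => o.elim Set.univ fun G => normCone Q G.1) K
    (by rintro (_ | G); exacts [isClosed_univ, isClosed_normCone _ _])
    (by rintro (_ | G); exacts [convex_univ, convex_normCone _ _])
    ((Set.toFinite _).isCompact_convexHull ℝ) (convex_convexHull ℝ _)
    (by
      intro y hy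
      rw [Fintype.sum_option]
      simp only [Option.elim]
      rw [hc', iv_pos (Set.mem_univ y), iv_pos (hUS (hKU hy))]
      norm_num)
  rw [Fintype.sum_option] at heuler
  simp only [Option.elim, Set.univ_inter] at heuler
  have hone : ∑ G : Idx, c G = 1 := by
    have h0 := hc' 0
    rw [iv_pos (p := (0 : V) ∈ suppDirs P)
      (let ⟨p, hp⟩ := hne; ⟨p, hp, fun q _ => by simp⟩)] at h0
    rw [← h0]
    exact Finset.sum_congr rfl fun G _ => by rw [iv_pos (zero_mem_normCone _ _), mul_one]
  have hnot : ∀ p : Prop, iv (¬ p) = 1 - iv p := fun p => by by_cases h : p <;> simp [iv, h]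
  have : ∀ G : Idx, c G * iv (x ∈ transl (v G) (tanCone Q G.1))
      = c G - c G * iv (normCone Q G.1 ∩ K).Nonempty := by
    intro G
    rw [iv_congr (hTU G), iv_congr (hKN G), hnot]
    ring
  rw [Finset.sum_congr rfl fun G _ => this G, Finset.sum_sub_distrib, hone, iv_congr hxU, hnot,
    ← iv_congr hKne]
  linarith

/-! ### Unitriangularity and the universal property -/

/-- Unitriangularity: `F t = ∑ e_{t'}` over the finitely many `t'` with `r t t'`, where `r` is a
partial order contained in `≤`. Injectivity looks at a minimal index, surjectivity is induction on
the number of `t'` above `t`. -/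
theorem linearCombination_bijective {τ : Type*} [PartialOrder τ] (F : τ → τ →₀ ℤ)
    (r : τ → τ → Prop) (hF : ∀ t t', F t t' = iv (r t t')) (hrefl : ∀ t, r t t)
    (htrans : ∀ t t' t'', r t t' → r t' t'' → r t t'') (hle : ∀ t t', r t t' → t ≤ t') :
    Function.Bijective (Finsupp.linearCombination ℤ F) := by
  classical
  have hsupp : ∀ t t', t' ∈ (F t).support ↔ r t t' := by
    intro t t'
    rw [Finsupp.mem_support_iff, hF]
    by_cases h : r t t' <;> simp [iv, h]
  constructor
  · rw [injective_iff_map_eq_zero]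
    intro b hb
    by_contra hne
    obtain ⟨t, ht, hmin⟩ := b.support.exists_minimal (Finsupp.support_nonempty_iff.2 hne)
    have h1 : (Finsupp.linearCombination ℤ F b) t = b t := by
      rw [Finsupp.linearCombination_apply, Finsupp.sum, Finset.sum_apply', Finset.sum_eq_single t]
      · rw [Finsupp.smul_apply, hF, iv_pos (hrefl t), smul_eq_mul, mul_one]
      · intro t0 ht0 hne0
        rw [Finsupp.smul_apply, hF, iv_neg, smul_zero]
        intro hr
        exact hne0 (le_antisymm (hle _ _ hr) (hmin ht0 (hle _ _ hr)))
      · exact fun h => absurd ht h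
    rw [hb] at h1
    exact Finsupp.mem_support_iff.1 ht h1.symm
  · have hs : ∀ n : ℕ, ∀ t, (F t).support.card = n →
        Finsupp.single t (1 : ℤ) ∈ (Finsupp.linearCombination ℤ F).range := by
      intro n
      induction n using Nat.strong_induction_on with
      | _ n ih =>
        intro t ht
        have htm : t ∈ (F t).support := (hsupp t t).2 (hrefl t)
        have e : F t = ∑ t' ∈ (F t).support, Finsupp.single t' (1 : ℤ) := by
          conv_lhs => rw [← Finsupp.sum_single (F t)]
          refine Finset.sum_congr rfl fun t' ht' => ?_
          rw [hF, iv_pos ((hsupp t t').1 ht')]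
        rw [← Finset.add_sum_erase _ _ htm] at e
        rw [← sub_eq_iff_eq_add] at e
        rw [← e]
        refine Submodule.sub_mem _ ⟨Finsupp.single t 1, by simp⟩ (Submodule.sum_mem _ ?_)
        intro t' ht'
        obtain ⟨hne, ht'⟩ := Finset.mem_erase.1 ht'
        have hr := (hsupp t t').1 ht'
        refine ih _ ?_ t' rfl
        rw [← ht]
        refine Finset.card_lt_card ⟨fun t'' h'' => ?_, fun hsub => ?_⟩
        · exact (hsupp _ _).2 (htrans _ _ _ hr ((hsupp _ _).1 h''))
        · exact hne (le_antisymm (hle _ _ ((hsupp _ _).1 (hsub htm))) (hle _ _ hr))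
    rw [← LinearMap.range_eq_top, eq_top_iff]
    intro b _
    rw [← Finsupp.sum_single b]
    refine Submodule.sum_mem _ fun t _ => ?_
    have := Submodule.smul_mem _ (b t) (hs _ t rfl)
    rwa [Finsupp.smul_single, smul_eq_mul, mul_one] at this

/-- An apex of a cone is also an apex of every translated tangent cone tightly containing it. -/
theorem tctight_apex {Q C T : Set V} {x : V} (hC : IsConvexCone C)
    (h : TCtight Q T (transl x C)) :
    ∃ F, IsFace Q F ∧ T = transl x (tanCone Q F) ∧ transl x C ⊆ T := by
  obtain ⟨F, x', hF, hx', rfl, hsub⟩ := tctight_iff.1 h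
  refine ⟨F, hF, ?_, hsub⟩
  have hc := mem_transl.1 hx'
  rw [transl_eq_iff (isConvexCone_tanCone Q F)]
  refine ⟨mem_transl.1 (hsub (mem_transl_self hC x)), ?_⟩
  have : x' + (x' - x) ∈ transl x C := by
    rw [mem_transl, add_sub_right_comm]
    exact hC.add_mem hc hc
  have := mem_transl.1 (hsub this)
  rw [Set.mem_neg, neg_sub]
  simpa using this

theorem valuative_sum {A : Type*} [AddCommGroup A] {Fam : Set (Set V)} {f : Set V → A}
    (hf : Valuative Fam f) {P : Set V} (hP : P ∈ Fam) {n : ℕ} {c : Fin n → ℤ} {T : Fin n → Set V}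
    (hT : ∀ i, T i ∈ Fam) (h : ∀ x, iv (x ∈ P) = ∑ i, c i * iv (x ∈ T i)) :
    f P = ∑ i, c i • f (T i) := by
  have := hf (n + 1) (Fin.cons (-1) c) (Fin.cons P T) (fun i => by
    refine Fin.cases ?_ (fun i => ?_) i
    · simpa using hP
    · simpa using hT i) (by
    ext x
    rw [Fin.sum_univ_succ]
    simp only [Fin.cons_zero, Fin.cons_succ, Pi.add_apply, Pi.smul_apply, Finset.sum_apply,
      indic_apply, smul_eq_mul, Pi.zero_apply]
    rw [h x]
    ring)
  rw [Fin.sum_univ_succ] at this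
  simp only [Fin.cons_zero, Fin.cons_succ, neg_smul, one_smul] at this
  exact (neg_add_eq_zero.1 this)

/-- The universal property for an arbitrary polytope in place of the permutohedron. -/
theorem universal_valuation_polytope {A : Type*} [AddCommGroup A] {X : Set V} (hX : X.Finite) :
    ∃ Fm : Set V → (↥(TranslSet (convexHull ℝ X)) →₀ ℤ),
      (∀ P : Set V, IsExtDef (convexHull ℝ X) P → ∀ T : ↥(TranslSet (convexHull ℝ X)),
        Fm P T = iv (TCtight (convexHull ℝ X) T.1 P)) ∧
      Valuative {P : Set V | IsExtDef (convexHull ℝ X) P} Fm ∧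
      ∀ f : Set V → A, Valuative {P : Set V | IsExtDef (convexHull ℝ X) P} f →
        ∃! φ : (↥(TranslSet (convexHull ℝ X)) →₀ ℤ) →+ A,
          ∀ P : Set V, IsExtDef (convexHull ℝ X) P → φ (Fm P) = f P := by
  classical
  let Fm : Set V → (↥(TranslSet (convexHull ℝ X)) →₀ ℤ) := fun P =>
    Finsupp.onFinset (finite_tight hX P).toFinset (fun T => iv (TCtight (convexHull ℝ X) T.1 P))
      (fun T hT => by
        rw [Set.Finite.mem_toFinset]
        by_contra h
        exact hT (iv_neg h))
  have hFm : ∀ P T, Fm P T = iv (TCtight (convexHull ℝ X) T.1 P) := fun P T => rfl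
  have hval : Valuative {P : Set V | IsExtDef (convexHull ℝ X) P} Fm := by
    intro k a P hP h
    have hx : ∀ x, ∑ i, a i * iv (x ∈ P i) = 0 := by
      intro x
      have := congrFun h x
      simpa only [Finset.sum_apply, Pi.smul_apply, indic_apply, smul_eq_mul, Pi.zero_apply]
        using this
    ext T
    rw [Finset.sum_apply']
    simp only [Finsupp.smul_apply, hFm, smul_eq_mul, Finsupp.zero_apply]
    exact tctight_valuation hX a P hP hx T.2
  have hext : ∀ T : ↥(TranslSet (convexHull ℝ X)), IsExtDef (convexHull ℝ X) T.1 := by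
    rintro ⟨_, F, v, hF, rfl⟩
    exact extDef_transl hX hF v
  refine ⟨Fm, fun P _ T => hFm P T, hval, fun f hf => ?_⟩
  have hbij := linearCombination_bijective (τ := ↥(TranslSet (convexHull ℝ X)))
    (fun T => Fm T.1) (fun T T' => TCtight (convexHull ℝ X) T'.1 T.1)
    (fun T T' => hFm T.1 T')
    (by
      rintro ⟨_, F, v, hF, rfl⟩
      exact tctight_iff.2
        ⟨F, v, hF, mem_transl_self (isConvexCone_tanCone _ _) v, rfl, subset_rfl⟩)
    (by
      rintro ⟨_, F, v, hF, rfl⟩ ⟨T', hT'⟩ ⟨T'', hT''⟩ h1 h2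
      obtain ⟨F', hF', rfl, hs1⟩ := tctight_apex (isConvexCone_tanCone _ _) h1
      obtain ⟨F'', hF'', rfl, hs2⟩ := tctight_apex (isConvexCone_tanCone _ _) h2
      exact tctight_iff.2 ⟨F'', v, hF'', mem_transl_self (isConvexCone_tanCone _ _) v, rfl,
        hs1.trans hs2⟩)
    (by
      rintro T T' h
      obtain ⟨_, _, _, _, _, hsub⟩ := tctight_iff.1 h
      exact hsub)
  let g := LinearEquiv.ofBijective _ hbij
  have hg : ∀ T : ↥(TranslSet (convexHull ℝ X)), g (Finsupp.single T 1) = Fm T.1 := by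
    intro T
    simp [g]
  let ψ : (↥(TranslSet (convexHull ℝ X)) →₀ ℤ) →ₗ[ℤ] A :=
    Finsupp.linearCombination ℤ fun T => f T.1
  have hφ : ∀ T : ↥(TranslSet (convexHull ℝ X)), ψ (g.symm (Fm T.1)) = f T.1 := by
    intro T
    rw [← hg, LinearEquiv.symm_apply_apply]
    simp [ψ]
  refine ⟨(ψ ∘ₗ g.symm.toLinearMap).toAddMonoidHom, fun P hP => ?_, fun φ' hφ' => ?_⟩
  · obtain ⟨n, c, T, h⟩ := extDef_eq_sum hX hP
    have h1 := valuative_sum hval (show P ∈ {P | IsExtDef (convexHull ℝ X) P} from hP)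
      (T := fun i => (T i).1) (fun i => hext (T i)) h
    have h2 := valuative_sum hf (show P ∈ {P | IsExtDef (convexHull ℝ X) P} from hP)
      (T := fun i => (T i).1) (fun i => hext (T i)) h
    change ψ (g.symm (Fm P)) = f P
    rw [h1, h2, map_sum, map_sum]
    exact Finset.sum_congr rfl fun i _ => by rw [map_smul, map_smul, hφ]
  · have hcomp : φ'.comp g.toLinearMap.toAddMonoidHom = ψ.toAddMonoidHom := by
      refine Finsupp.addHom_ext' fun T => AddMonoidHom.ext_int ?_
      change φ' (g (Finsupp.single T 1)) = ψ (Finsupp.single T 1)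
      rw [hg, hφ' _ (hext T)]
      simp [ψ]
    refine AddMonoidHom.ext fun b => ?_
    have := DFunLike.congr_fun hcomp (g.symm b)
    change φ' (g (g.symm b)) = ψ (g.symm b) at this
    rwa [g.apply_symm_apply] at this

/-- The Weyl group permutes the spanning set `R`, and an isometry is determined by its values
there. -/
theorem weyl_orbit_finite (R : Finset V) (hspan : Submodule.span ℝ (R : Set V) = ⊤)
    (hrefl : ∀ α ∈ R, ∀ β ∈ R, β - ((2 * ⟪β, α⟫) / ⟪α, α⟫) • α ∈ R) (p : V) :
    {x : V | ∃ w ∈ WeylGrp R, x = w p}.Finite := by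
  have hpres : ∀ w ∈ WeylGrp R, ∀ β ∈ R, w β ∈ R := by
    intro w hw
    induction hw using Subgroup.closure_induction with
    | mem s hs =>
      obtain ⟨α, hα, h⟩ := hs
      intro β hβ
      rw [h]
      exact hrefl α hα β hβ
    | one => exact fun β hβ => hβ
    | mul a b _ _ ha hb => exact fun β hβ => ha _ (hb β hβ)
    | inv a _ ha =>
      intro β hβ
      obtain ⟨γ, hγ, rfl⟩ := Finset.surjOn_of_injOn_of_card_le (s := R) (t := R) a ha
        a.injective.injOn le_rfl hβ
      have : a⁻¹ (a γ) = γ := a.symm_apply_apply γ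
      rwa [this]
  have hfin : Finite (WeylGrp R) := by
    refine Finite.of_injective (fun (w : WeylGrp R) (β : R) => (⟨w.1 β, hpres w w.2 β β.2⟩ : R)) ?_
    intro w w' h
    apply Subtype.ext
    have : w.1.toLinearEquiv.toLinearMap = w'.1.toLinearEquiv.toLinearMap := by
      refine LinearMap.ext_on hspan fun β hβ => ?_
      exact congrArg Subtype.val (congrFun h ⟨β, hβ⟩)
    ext x
    exact LinearMap.congr_fun this x
  refine (Set.finite_range fun w : WeylGrp R => w.1 p).subset ?_
  rintro _ ⟨w, hw, rfl⟩
  exact ⟨⟨w, hw⟩, rfl⟩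

/-- the function `ℱ` recording tight containments in translates of tangent cones
of the `Φ`-permutohedron is the universal valuative function on extended generalized
`Φ`-permutohedra. -/
theorem universal_valuation_GP {A : Type*} [AddCommGroup A]
    (R : Finset V) (h0 : (0 : V) ∉ R)
    (hspan : Submodule.span ℝ (R : Set V) = ⊤)
    (hrefl : ∀ α ∈ R, ∀ β ∈ R, β - ((2 * ⟪β, α⟫) / ⟪α, α⟫) • α ∈ R)
    (hred : ∀ α ∈ R, ∀ c : ℝ, c • α ∈ (R : Set V) → c = 1 ∨ c = -1)
    (p : V) (hp : ∀ w ∈ WeylGrp R, w p = p → w = 1)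
    (Pi : Set V) (hPi : Pi = convexHull ℝ {x : V | ∃ w ∈ WeylGrp R, x = w p}) :
    ∃ Fm : Set V → (↥(TranslSet Pi) →₀ ℤ),
      (∀ P : Set V, IsExtDef Pi P → ∀ T : ↥(TranslSet Pi), Fm P T = iv (TCtight Pi T.1 P)) ∧
      Valuative {P : Set V | IsExtDef Pi P} Fm ∧
      ∀ f : Set V → A, Valuative {P : Set V | IsExtDef Pi P} f →
        ∃! φ : (↥(TranslSet Pi) →₀ ℤ) →+ A, ∀ P : Set V, IsExtDef Pi P → φ (Fm P) = f P := by
  subst hPi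
  exact universal_valuation_polytope (weyl_orbit_finite R hspan hrefl p)
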